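/- Let Q be a finite quiver without loops and multiedges and let R be a lluf subquiver of Q with |π_0(R)| = |π_0(Q)|. If DE(R) is a facet of DE(Q), then Q does not admit a rank function and R admits a rank function ρ ∈ ℝ^{Q_0} such that (ρ(v)−ρ(w)+1)(ρ(v')−ρ(w')+1) > 0 for any (v,w),(v',w') ∈ Q_1 ∖ R_1. -/

import Mathlib

open scoped BigOperators

/-- The vector `ε_(v,w) = e_v - e_w` in `ℝ^V`. -/
def epsVec {V : Type*} [DecidableEq V] (e : V × V) : V → ℝ :=
  fun u => (if u = e.1 then (1 : ℝ) else 0) - (if u = e.2 then (1 : ℝ) else 0)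

/-- The directed edge polytope of the quiver with edge set `E`. -/
def DE {V : Type*} [DecidableEq V] (E : Set (V × V)) : Set (V → ℝ) :=
  convexHull ℝ (epsVec '' E)

/-- The edge relation of a quiver. -/
def edgeRel {V : Type*} (E : Set (V × V)) : V → V → Prop := fun a b => (a, b) ∈ E

/-- Number of connected components (with respect to undirected walks). -/
noncomputable def numComponents {V : Type*} (E : Set (V × V)) : ℕ :=
  Nat.card (Quot (Relation.EqvGen (edgeRel E)))

/-- `E` admits a rank function. -/
def HasRankFn {V : Type*} (E : Set (V × V)) : Prop :=
  ∃ ρ : V → ℝ, ∀ e ∈ E, ρ e.1 + 1 = ρ e.2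

open Classical in
/-- Dimension of a polytope: dimension of its affine hull, `-1` for the empty set. -/
noncomputable def polyDim {V : Type*} (s : Set (V → ℝ)) : ℤ :=
  if s = ∅ then -1 else (Module.finrank ℝ (affineSpan ℝ s).direction : ℤ)

/-- `F` is a face of `P`: `F = P` or `F` is the intersection of `P`
with a supporting hyperplane. -/
def IsFaceOf {V : Type*} (F P : Set (V → ℝ)) : Prop :=
  F = P ∨ ∃ (l : (V → ℝ) →ₗ[ℝ] ℝ) (c : ℝ), (∀ x ∈ P, l x ≤ c) ∧ F = {x ∈ P | l x = c}

/-- `F` is a facet of `P`: a face of dimension `dim P - 1`. -/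
def IsFacetOf {V : Type*} (F P : Set (V → ℝ)) : Prop :=
  IsFaceOf F P ∧ polyDim F = polyDim P - 1

/-- Each connected component of the subquiver `R1` is a full subquiver of `Q1`. -/
def ComponentsFull {V : Type*} (Q1 R1 : Set (V × V)) : Prop :=
  ∀ v w : V, Relation.EqvGen (edgeRel R1) v w → (v, w) ∈ Q1 → (v, w) ∈ R1

/-- Edge set of the contraction `Q/R`. -/
def contraction {V : Type*} (Q1 R1 : Set (V × V)) :
    Set (Quot (Relation.EqvGen (edgeRel R1)) × Quot (Relation.EqvGen (edgeRel R1))) :=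
  {p | ∃ e ∈ Q1 \ R1, p = (Quot.mk _ e.1, Quot.mk _ e.2)}

/-- A quiver is acyclic if it has no closed directed walk of length `> 1`. -/
def IsAcyclicQ {α : Type*} (E : Set (α × α)) : Prop :=
  ¬ ∃ (n : ℕ) (v : Fin (n + 1) → α), 1 < n ∧ v 0 = v (Fin.last n) ∧
      ∀ i : Fin n, (v i.castSucc, v i.succ) ∈ E

lemma epsVec_eq {V : Type*} [DecidableEq V] (e : V × V) :
    epsVec e = Pi.single e.1 (1 : ℝ) - Pi.single e.2 (1 : ℝ) := by
  funext u
  simp [epsVec, Pi.single_apply]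

lemma eqvGen_of_comp {V : Type*} [Fintype V] (Q1 R1 : Set (V × V)) (hsub : R1 ⊆ Q1)
    (hcomp : numComponents R1 = numComponents Q1) (e : V × V) (he : e ∈ Q1) :
    Relation.EqvGen (edgeRel R1) e.1 e.2 := by
  classical
  have hm : ∀ a b, Relation.EqvGen (edgeRel R1) a b → Relation.EqvGen (edgeRel Q1) a b :=
    fun a b h => Relation.EqvGen.mono (r := edgeRel R1) (p := edgeRel Q1) (fun x y hxy => hsub hxy) a b h
  let φ : Quot (Relation.EqvGen (edgeRel R1)) → Quot (Relation.EqvGen (edgeRel Q1)) :=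
    Quot.map id hm
  have hsurj : Function.Surjective φ := by
    intro q
    induction q using Quot.ind with
    | mk a => exact ⟨Quot.mk _ a, rfl⟩
  haveI : Finite (Quot (Relation.EqvGen (edgeRel R1))) := Quot.finite _
  have hbij : Function.Bijective φ :=
    (Nat.bijective_iff_surjective_and_card φ).2 ⟨hsurj, hcomp⟩
  have h1 : (Quot.mk _ e.1 : Quot (Relation.EqvGen (edgeRel R1))) = Quot.mk _ e.2 := by
    apply hbij.1
    exact Quot.sound (Relation.EqvGen.rel _ _ he)
  have h2 := Quot.eqvGen_exact h1
  exact (Equivalence.eqvGen_iff (Relation.EqvGen.is_equivalence _)).1 h2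

lemma eps_mem_span {V : Type*} [DecidableEq V] (R1 : Set (V × V)) (a b : V)
    (h : Relation.EqvGen (edgeRel R1) a b) :
    epsVec (a, b) ∈ Submodule.span ℝ (epsVec '' R1) := by
  induction h with
  | rel x y h => exact Submodule.subset_span ⟨_, h, rfl⟩
  | refl x => simp [epsVec_eq]
  | symm x y _ ih =>
    have : epsVec (y, x) = - epsVec (x, y) := by simp [epsVec_eq]
    rw [this]; exact neg_mem ih
  | trans x y z _ _ h1 h2 =>
    have : epsVec (x, z) = epsVec (x, y) + epsVec (y, z) := by simp [epsVec_eq]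
    rw [this]; exact add_mem h1 h2

lemma eps_notMem {V : Type*} [DecidableEq V] (R1 : Set (V × V))
    (hloop : ∀ v : V, (v, v) ∉ R1) (e : V × V) (hne : e.1 ≠ e.2) (he : e ∉ R1) :
    epsVec e ∉ DE R1 := by
  intro h
  have hc : Convex ℝ {x : V → ℝ | x e.1 - x e.2 ≤ 1} := by
    intro x hx y hy a b ha hb hab
    simp only [Set.mem_ofPred_eq, Pi.add_apply, Pi.smul_apply, smul_eq_mul] at *
    nlinarith
  have hs : epsVec '' R1 ⊆ {x : V → ℝ | x e.1 - x e.2 ≤ 1} := by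
    rintro _ ⟨⟨a, b⟩, hab, rfl⟩
    obtain ⟨v, w⟩ := e
    have hab' : a ≠ b := by rintro rfl; exact hloop _ hab
    have h3 : ¬ (v = a ∧ w = b) := by rintro ⟨rfl, rfl⟩; exact he hab
    simp only [Set.mem_ofPred_eq, epsVec] at *
    split_ifs <;> first | (norm_num; done) | (exfalso; grind)
  have h4 := convexHull_min hs hc h
  simp [epsVec, hne, hne.symm] at h4
  norm_num at h4

/-- If `DE(R)` is a facet of `DE(Q)` and `|π_0(R)| = |π_0(Q)|`, then `Q` has no rank
function and `R` has a rank function with the positivity condition on `Q_1 \ R_1`. -/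
theorem facet_has_rank_function {V : Type*} [Fintype V] [DecidableEq V]
    (Q1 R1 : Set (V × V)) (hloop : ∀ v : V, (v, v) ∉ Q1) (hsub : R1 ⊆ Q1)
    (hcomp : numComponents R1 = numComponents Q1)
    (hfacet : IsFacetOf (DE R1) (DE Q1)) :
    ¬ HasRankFn Q1 ∧
      ∃ ρ : V → ℝ, (∀ e ∈ R1, ρ e.1 + 1 = ρ e.2) ∧
        ∀ e ∈ Q1 \ R1, ∀ e' ∈ Q1 \ R1,
          0 < (ρ e.1 - ρ e.2 + 1) * (ρ e'.1 - ρ e'.2 + 1) := by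
  classical
  have hspan : ∀ e ∈ Q1, epsVec e ∈ Submodule.span ℝ (epsVec '' R1) := fun e he =>
    eps_mem_span R1 e.1 e.2 (eqvGen_of_comp Q1 R1 hsub hcomp e he)
  obtain ⟨hface, hdim⟩ := hfacet
  have hne : DE R1 ≠ DE Q1 := by
    intro h; rw [h] at hdim; omega
  obtain ⟨l, c, hle, hF⟩ := hface.resolve_left hne
  have hmemQ : ∀ e ∈ Q1, epsVec e ∈ DE Q1 := fun e he => subset_convexHull ℝ _ ⟨e, he, rfl⟩
  have hlR : ∀ e ∈ R1, l (epsVec e) = c := by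
    intro e he
    have : epsVec e ∈ DE R1 := subset_convexHull ℝ _ ⟨e, he, rfl⟩
    rw [hF] at this
    exact this.2
  have hlQ : ∀ e ∈ Q1 \ R1, l (epsVec e) < c := by
    rintro e ⟨he, heR⟩
    refine lt_of_le_of_ne (hle _ (hmemQ e he)) fun h => ?_
    have h1 : epsVec e ∈ DE R1 := by
      rw [hF]; exact ⟨hmemQ e he, h⟩
    refine eps_notMem R1 (fun v hv => hloop v (hsub hv)) e ?_ heR h1
    intro h2
    apply hloop e.1
    rw [show (e.1, e.1) = e from Prod.ext rfl h2]
    exact he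
  -- existence of a functional
  have hf : ∃ f : (V → ℝ) →ₗ[ℝ] ℝ, ∀ e ∈ R1, f (epsVec e) = -1 := by
    rcases R1.eq_empty_or_nonempty with h0 | ⟨e0, he0⟩
    · exact ⟨0, fun e he => by simp [h0] at he⟩
    have hnot : epsVec e0 ∉ vectorSpan ℝ (epsVec '' R1) := by
      intro hmem
      have hL : Submodule.span ℝ (epsVec '' R1) ≤ vectorSpan ℝ (epsVec '' R1) := by
        rw [Submodule.span_le]
        rintro _ ⟨e, he, rfl⟩
        have h1 : epsVec e -ᵥ epsVec e0 ∈ vectorSpan ℝ (epsVec '' R1) :=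
          vsub_mem_vectorSpan ℝ ⟨e, he, rfl⟩ ⟨e0, he0, rfl⟩
        have h2 := add_mem h1 hmem
        simpa using h2
      have hD : vectorSpan ℝ (epsVec '' Q1) ≤ vectorSpan ℝ (epsVec '' R1) := by
        refine le_trans ?_ hL
        rw [vectorSpan_def, Submodule.span_le]
        rintro _ ⟨_, ⟨e, he, rfl⟩, _, ⟨e', he', rfl⟩, rfl⟩
        exact sub_mem (hspan e he) (hspan e' he')
      have hfin := Submodule.finrank_mono hD
      have hR0 : DE R1 ≠ ∅ :=
        Set.Nonempty.ne_empty ⟨_, subset_convexHull ℝ _ ⟨e0, he0, rfl⟩⟩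
      have hQ0 : DE Q1 ≠ ∅ := Set.Nonempty.ne_empty ⟨_, hmemQ e0 (hsub he0)⟩
      rw [polyDim, polyDim, if_neg hR0, if_neg hQ0, DE, DE, affineSpan_convexHull,
        affineSpan_convexHull, direction_affineSpan, direction_affineSpan] at hdim
      omega
    obtain ⟨g, hg, hker⟩ := Submodule.exists_le_ker_of_notMem hnot
    refine ⟨(-(g (epsVec e0))⁻¹) • g, fun e he => ?_⟩
    have h1 : epsVec e -ᵥ epsVec e0 ∈ vectorSpan ℝ (epsVec '' R1) :=
      vsub_mem_vectorSpan ℝ ⟨e, he, rfl⟩ ⟨e0, he0, rfl⟩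
    have h2 : g (epsVec e - epsVec e0) = 0 := hker h1
    rw [map_sub, sub_eq_zero] at h2
    simp [h2, hg]
  obtain ⟨f, hf⟩ := hf
  have hlf : ∀ e ∈ Q1, l (epsVec e) = -c * f (epsVec e) := by
    intro e he
    have hEq : Set.EqOn l ((-c) • f : (V → ℝ) →ₗ[ℝ] ℝ) (Submodule.span ℝ (epsVec '' R1)) := by
      apply LinearMap.eqOn_span
      rintro _ ⟨e, he, rfl⟩
      simp [hlR e he, hf e he]
    simpa using hEq (hspan e he)
  have hpos : ∀ e ∈ Q1 \ R1, 0 < c * (f (epsVec e) + 1) := by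
    intro e he
    have h1 := hlQ e he
    rw [hlf e he.1] at h1
    linarith
  have hρ : ∀ (g : V → ℝ) (e : V × V), 
      Fintype.linearCombination ℝ g (epsVec e) = g e.1 - g e.2 := by
    intro g e
    rw [epsVec_eq, map_sub]
    simp [Fintype.linearCombination_apply_single]
  refine ⟨?_, fun v => f (Pi.single v 1), ?_, ?_⟩
  · rintro ⟨g, hg⟩
    have hex : ∃ e, e ∈ Q1 \ R1 := by
      by_contra hcon
      push Not at hcon
      apply hne
      have : R1 = Q1 := hsub.antisymm fun e he => by
        by_contra h; exact hcon e ⟨he, h⟩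
      rw [this]
    obtain ⟨e, he⟩ := hex
    have hEq : Set.EqOn f (Fintype.linearCombination ℝ g)
        (Submodule.span ℝ (epsVec '' R1)) := by
      apply LinearMap.eqOn_span
      rintro _ ⟨e, he, rfl⟩
      rw [hf e he, hρ]
      linarith [hg e (hsub he)]
    have h1 := hEq (hspan e he.1)
    rw [hρ] at h1
    have h2 := hpos e he
    have h3 : f (epsVec e) + 1 = 0 := by rw [h1]; linarith [hg e he.1]
    rw [h3] at h2
    simp at h2
  · intro e he
    have h1 := hf e he
    rw [epsVec_eq, map_sub] at h1
    linarith
  · intro e he e' he'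
    have h1 := hpos e he
    have h2 := hpos e' he'
    rw [epsVec_eq, map_sub] at h1 h2
    have h3 := mul_pos h1 h2
    by_contra hcon
    push Not at hcon
    nlinarith [mul_nonneg (sq_nonneg c) (neg_nonneg.2 hcon)]
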